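/- arXiv:2406.00824 — 2 statements merged into one kernel-verified Lean document; each statement's English description precedes it below -/
import Mathlib

section
/- For any MDP M given by a symbolic description and any well-labeled finished PASG P for M with root n₀ labeled by the initial valuation, the maximal probability of reaching a target node in the MDP induced by P is at most as high as the maximal probability of reaching a target state in M. -/
open scoped ENNReal

/-- A Markov decision process with state space `S` and action set `A`:
`P s a s'` is the transition probability. For the MDPs considered here, for every
`s, a` the total mass `∑' s', P s a s'` is `1` (the action is enabled) or `0`. -/
structure MDP (S : Type*) (A : Type*) where
  P : S → A → S → ℝ≥0∞
  init : S

namespace MDP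

variable {S A : Type*}

/-- An action is enabled in a state iff its outgoing probabilities sum to one. -/
def Enabled (M : MDP S A) (s : S) (a : A) : Prop :=
  (∑' s', M.P s a s') = 1

/-- The last state of a history (a list of action/state steps), given the start state. -/
def lastSt (s : S) (h : List (A × S)) : S :=
  ((h.getLast?).map Prod.snd).getD s

open Classical in
/-- Probability of a finite path (a list of action/state steps) from state `s` with
accumulated history `h`, under the (history-dependent) strategy `σ`. -/
noncomputable def pathProb (M : MDP S A) (σ : List (A × S) → A) :
    S → List (A × S) → List (A × S) → ℝ≥0∞
  | _, _, [] => 1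
  | s, h, (a, s') :: rest =>
      (if σ h = a then M.P s a s' else 0) * pathProb M σ s' (h ++ [(a, s')]) rest

/-- The path visits the target set `E` exactly at its final state and never before. -/
def FirstHit (E : Set S) : S → List (A × S) → Prop
  | s, [] => s ∈ E
  | s, (_, s') :: rest => s ∉ E ∧ FirstHit E s' rest

/-- A finite trace: every step has positive probability. -/
def IsTrace (M : MDP S A) : S → List (A × S) → Prop
  | _, [] => True
  | s, (a, s') :: rest => 0 < M.P s a s' ∧ IsTrace M s' rest

/-- A strategy is valid from `s₀` if it always chooses an enabled action
whenever some action is enabled in the current state. -/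
def ValidFrom (M : MDP S A) (s₀ : S) (σ : List (A × S) → A) : Prop :=
  ∀ h : List (A × S), (∃ a, M.Enabled (lastSt s₀ h) a) → M.Enabled (lastSt s₀ h) (σ h)

/-- Probability of reaching `E` from `s₀` under strategy `σ`: the total mass of the
(pairwise incompatible) first-hitting paths. -/
noncomputable def reachProbFrom (M : MDP S A) (σ : List (A × S) → A) (s₀ : S)
    (E : Set S) : ℝ≥0∞ :=
  ∑' l : {l : List (A × S) // FirstHit E s₀ l}, pathProb M σ s₀ [] l.1

/-- Maximal probability of reaching `E` from `s`. -/
noncomputable def PmaxFrom (M : MDP S A) (E : Set S) (s : S) : ℝ≥0∞ :=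
  ⨆ σ : {σ : List (A × S) → A // ValidFrom M s σ}, reachProbFrom M σ.1 s E

/-- Maximal probability of reaching `E` from the initial state. -/
noncomputable def Pmax (M : MDP S A) (E : Set S) : ℝ≥0∞ :=
  PmaxFrom M E M.init

/-- Minimal probability of reaching `E` from `s`. -/
noncomputable def PminFrom (M : MDP S A) (E : Set S) (s : S) : ℝ≥0∞ :=
  ⨅ σ : {σ : List (A × S) → A // ValidFrom M s σ}, reachProbFrom M σ.1 s E

/-- Minimal probability of reaching `E` from the initial state. -/
noncomputable def Pmin (M : MDP S A) (E : Set S) : ℝ≥0∞ :=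
  PminFrom M E M.init

end MDP

/-- A symbolic MDP over states `Val` (valuations of the variables): a set of commands,
each with a guard and a finite-support distribution over assignments (semantically,
state transformers `Val → Val`), and an initial valuation. -/
structure SymMDP (Val : Type*) (Cmd : Type*) where
  guard : Cmd → Val → Prop
  dist : Cmd → PMF (Val → Val)
  finSupp : ∀ c, (dist c).support.Finite
  init : Val

open Classical in
/-- The MDP induced by a symbolic MDP: command `c` is enabled in `s` iff its guard
holds, and then the next-state distribution is the pushforward of `dist c` under
evaluation at `s`. -/
noncomputable def SymMDP.toMDP {Val Cmd : Type*} (M : SymMDP Val Cmd) : MDP Val Cmd where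
  P := fun s c s' => if M.guard c s then ((M.dist c).map fun a => a s) s' else 0
  init := M.init

/-- Three-valued truth values for evaluating Boolean expressions on abstract states. -/
inductive TV
  | tt
  | ff
  | uk

/-- An abstract domain over the concrete state set `Val`, with partially ordered
abstract states `AS`, abstraction `abstr`, concretization `conc`, and the Galois
condition `abstr A ≤ b ↔ A ⊆ conc b`. -/
structure AbsDom (Val : Type*) (AS : Type*) [PartialOrder AS] where
  abstr : Set Val → AS
  conc : AS → Set Val
  galois : ∀ (A : Set Val) (b : AS), abstr A ≤ b ↔ A ⊆ conc b

namespace AbsDom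

variable {Val AS : Type*} [PartialOrder AS]

open Classical in
/-- Three-valued evaluation of a Boolean expression `b` on an abstract state:
`tt` if it holds in all concretizations, `ff` if in none, `uk` otherwise. -/
noncomputable def beval (D : AbsDom Val AS) (b : Val → Prop) (x : AS) : TV :=
  if ∀ s ∈ D.conc x, b s then TV.tt
  else if ∀ s ∈ D.conc x, ¬ b s then TV.ff
  else TV.uk

/-- The abstract post operator: `post a x = abstr (a '' conc x)`. -/
def post (D : AbsDom Val AS) (a : Val → Val) (x : AS) : AS :=
  D.abstr (a '' D.conc x)

end AbsDom

open Classical in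
/-- Two-valued evaluation of a Boolean expression in a concrete state, as a `TV`. -/
noncomputable def cevalTV {Val : Type*} (b : Val → Prop) (s : Val) : TV :=
  if b s then TV.tt else TV.ff

/-- A probabilistic adaptive simulation graph (PASG). A transition edge `(n, c, f) ∈ ET`
goes from node `n` via command `c`; `f` matches each assignment in the support of `c`'s
distribution with its result node (thereby inducing the node distribution of the edge as
the pushforward of the assignment distribution). `EC n = some n'` means node `n` is
covered by its covering node `n'`; `Lc`/`La` are the concrete/abstract labelings. -/
structure PASG (Val AS Cmd Node : Type*) where
  ET : Set (Node × Cmd × ((Val → Val) → Node))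
  EC : Node → Option Node
  Lc : Node → Val
  La : Node → AS

namespace PASG

variable {Val AS Cmd Node : Type*} [PartialOrder AS]

/-- A node is covered iff it has an outgoing covering edge. -/
def Covered (P : PASG Val AS Cmd Node) (n : Node) : Prop := P.EC n ≠ none

/-- A node is expanded iff every command enabled in its concrete label has a
transition edge. -/
def Expanded (M : SymMDP Val Cmd) (P : PASG Val AS Cmd Node) (n : Node) : Prop :=
  ∀ c, M.guard c (P.Lc n) → ∃ f, (n, c, f) ∈ P.ET

/-- A PASG is finished iff every node is covered or expanded. -/
def Finished (M : SymMDP Val Cmd) (P : PASG Val AS Cmd Node) : Prop :=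
  ∀ n, P.Covered n ∨ P.Expanded M n

/-- The well-labeledness constraints A1, A2, B1, B2, C1, C2, C3, D1. -/
structure WellLabeled (M : SymMDP Val Cmd) (D : AbsDom Val AS)
    (P : PASG Val AS Cmd Node) : Prop where
  /-- A1: the abstract label contains the concrete label. -/
  A1 : ∀ n, P.Lc n ∈ D.conc (P.La n)
  /-- A2: the concrete label exactly represents the abstract label w.r.t. enabledness. -/
  A2 : ∀ n c, D.beval (M.guard c) (P.La n) = cevalTV (M.guard c) (P.Lc n)
  /-- B1: the command of a transition edge is enabled in the concrete label of its source. -/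
  B1 : ∀ e ∈ P.ET, M.guard e.2.1 (P.Lc e.1)
  /-- B2 (probabilities): result nodes of distinct assignments are distinct, hence the
  induced node distribution gives each result node exactly the assignment's probability. -/
  B2inj : ∀ e ∈ P.ET, Set.InjOn e.2.2 (M.dist e.2.1).support
  /-- B2 (concrete labels): the concrete label of a result node is the result of the
  corresponding assignment. -/
  B2c : ∀ e ∈ P.ET, ∀ a ∈ (M.dist e.2.1).support, P.Lc (e.2.2 a) = a (P.Lc e.1)
  /-- B2 (abstract labels): the abstract label of a result node overapproximates the
  abstract post of the source. -/
  B2a : ∀ e ∈ P.ET, ∀ a ∈ (M.dist e.2.1).support, D.post a (P.La e.1) ≤ P.La (e.2.2 a)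
  /-- C1: the abstract label of the covering node contains the concrete label of the
  covered node. -/
  C1 : ∀ n n', P.EC n = some n' → P.Lc n ∈ D.conc (P.La n')
  /-- C2: the covering node is at least as abstract as the covered node. -/
  C2 : ∀ n n', P.EC n = some n' → P.La n ≤ P.La n'
  /-- C3: a covering node is not itself covered. -/
  C3 : ∀ n n', P.EC n = some n' → P.EC n' = none
  /-- D1: at most one node with a given concrete label is non-covered. -/
  D1 : ∀ n n', n ≠ n' → P.Lc n = P.Lc n' → P.Covered n ∨ P.Covered n'

open Classical in
/-- The MDP induced by a finished PASG with root `n₀`: in a non-covered node a command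
is enabled iff it has a transition edge (with the induced node distribution); a covered
node has only the extra `cover` action (`Sum.inr ()`), leading with probability `1` to
its covering node. -/
noncomputable def toMDP (M : SymMDP Val Cmd) (P : PASG Val AS Cmd Node) (n₀ : Node) :
    MDP Node (Cmd ⊕ Unit) where
  init := n₀
  P := fun n act m =>
    match act with
    | Sum.inl c =>
        if h : P.EC n = none ∧ ∃ f, (n, c, f) ∈ P.ET then ((M.dist c).map h.2.choose) m
        else 0
    | Sum.inr _ =>
        match P.EC n with
        | some n' => if m = n' then 1 else 0
        | none => 0

end PASG

/-!
Maximal reachability is the least pre-fixed point of the Bellman operator. In an arbitrary MDP,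
every `w` with `bellman w ≤ w` bounds the reachability probability of every strategy, by induction
on the length of the first-hitting paths. Conversely, if every action has total mass `0` or `1`,
then `PmaxFrom` is itself such a `w`: playing an action first and then any valid strategy for the
state reached is again a valid strategy, and the strategies after different successors are chosen
independently, which interchanges the supremum with the sum over successors.

Hence it suffices to give the nodes of the graph a pre-fixed point. Assign to a node the infimum of
`PmaxFrom` over the states it represents. Such a state has the same enabled commands as the
node (A2), so it can imitate a transition edge by the same command, which leads to states
represented by the successors (B2), and a covering edge by doing nothing (C2).
-/

section Summation

lemma sum_iSup_eq_iSup_sum_choice {ι : Type*} {J : ι → Type*} [∀ i, Nonempty (J i)]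
    (t : Finset ι) (f : ∀ i, J i → ℝ≥0∞) :
    ∑ i ∈ t, ⨆ j, f i j = ⨆ g : ∀ i, J i, ∑ i ∈ t, f i (g i) := by
  have directed (g g' : ∀ i, J i) :
      ∃ m : ∀ i, J i, ∀ i, f i (g i) ≤ f i (m i) ∧ f i (g' i) ≤ f i (m i) := by
    have larger (i : ι) : ∃ j, f i (g i) ≤ f i j ∧ f i (g' i) ≤ f i j := by
      rcases le_total (f i (g i)) (f i (g' i)) with h | h
      exacts [⟨g' i, h, le_rfl⟩, ⟨g i, le_rfl, h⟩]
    choose m hm using larger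
    exact ⟨m, hm⟩
  rw [← ENNReal.finsetSum_iSup directed]
  exact Finset.sum_congr rfl fun i _ => ((Function.surjective_eval i).iSup_comp (f i)).symm

lemma tsum_iSup_eq_iSup_tsum_choice {ι : Type*} {J : ι → Type*} [∀ i, Nonempty (J i)]
    (f : ∀ i, J i → ℝ≥0∞) :
    ∑' i, ⨆ j, f i j = ⨆ g : ∀ i, J i, ∑' i, f i (g i) := by
  simp only [ENNReal.tsum_eq_iSup_sum, sum_iSup_eq_iSup_sum_choice]
  exact iSup_comm

lemma tsum_pmf_map_mul {α β : Type*} (p : PMF α) (f : α → β) (w : β → ℝ≥0∞) :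
    ∑' b, p.map f b * w b = ∑' a, p a * w (f a) := by
  classical
  simp only [PMF.map_apply, ← ENNReal.tsum_mul_right]
  rw [ENNReal.tsum_comm]
  refine tsum_congr fun a => ?_
  rw [tsum_eq_single (f a) fun b hb => by simp [hb], if_pos rfl]

end Summation

namespace MDP

section FirstStep

variable {S A : Type*} (M : MDP S A) {E : Set S} (σ : List (A × S) → A) {s : S}

open Classical in
/-- Probability that the run of `M` from `s` under `σ` enters `E` for the first time at the end of
the path `l`. -/
noncomputable def hitProb (E : Set S) (s : S) (l : List (A × S)) : ℝ≥0∞ :=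
  if FirstHit E s l then pathProb M σ s [] l else 0

lemma reachProbFrom_eq_tsum_hitProb : reachProbFrom M σ s E = ∑' l, hitProb M σ E s l := by
  classical
  refine (tsum_subtype {l | FirstHit E s l} (pathProb M σ s [])).trans (tsum_congr fun l => ?_)
  simp only [Set.indicator_apply, Set.mem_ofPred_eq, hitProb]

lemma pathProb_cons_history (p : A × S) (h l : List (A × S)) :
    pathProb M σ s (p :: h) l = pathProb M (σ ∘ List.cons p) s h l := by
  induction l generalizing s h with
  | nil => rfl
  | cons q l ih => simp only [pathProb, Function.comp_apply, List.cons_append, ih]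

lemma hitProb_cons_self (hs : s ∉ E) (s' : S) (l : List (A × S)) :
    hitProb M σ E s ((σ [], s') :: l) =
      M.P s (σ []) s' * hitProb M (σ ∘ List.cons (σ [], s')) E s' l := by
  by_cases hl : FirstHit E s' l <;>
    simp [hitProb, FirstHit, hs, hl, pathProb, pathProb_cons_history]

lemma support_hitProb_subset (hs : s ∉ E) :
    Function.support (hitProb M σ E s) ⊆
      Set.range fun x : S × List (A × S) => (σ [], x.1) :: x.2 := by
  rintro (_ | ⟨⟨a, s'⟩, l⟩) hl
  · simp [hitProb, FirstHit, hs] at hl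
  · obtain rfl : σ [] = a := by
      by_contra ha
      simp [hitProb, pathProb, ha] at hl
    exact ⟨(s', l), rfl⟩

lemma tsum_mul_hitProb_of_mem (hs : s ∈ E) (g : List (A × S) → ℝ≥0∞) :
    ∑' l, g l * hitProb M σ E s l = g [] := by
  rw [tsum_eq_single []]
  · simp [hitProb, FirstHit, hs, pathProb]
  · rintro (_ | ⟨p, l⟩) hl
    · exact absurd rfl hl
    · simp [hitProb, FirstHit, hs]

lemma tsum_mul_hitProb_of_notMem (hs : s ∉ E) (g : List (A × S) → ℝ≥0∞) :
    ∑' l, g l * hitProb M σ E s l =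
      ∑' s', M.P s (σ []) s' *
        ∑' l, g ((σ [], s') :: l) * hitProb M (σ ∘ List.cons (σ [], s')) E s' l := by
  have cons_injective :
      Function.Injective fun x : S × List (A × S) => (σ [], x.1) :: x.2 := by
    rintro ⟨s₁, l₁⟩ ⟨s₂, l₂⟩ h
    simpa using h
  have support_subset :=
    (Function.support_mul_subset_right g _).trans (support_hitProb_subset M σ hs)
  rw [← cons_injective.tsum_eq support_subset, ENNReal.tsum_prod']
  simp only [hitProb_cons_self M σ hs, ← ENNReal.tsum_mul_left, mul_left_comm]

lemma reachProbFrom_of_mem (hs : s ∈ E) : reachProbFrom M σ s E = 1 := by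
  simpa [reachProbFrom_eq_tsum_hitProb] using tsum_mul_hitProb_of_mem M σ hs 1

lemma reachProbFrom_of_notMem (hs : s ∉ E) :
    reachProbFrom M σ s E =
      ∑' s', M.P s (σ []) s' * reachProbFrom M (σ ∘ List.cons (σ [], s')) s' E := by
  simpa [reachProbFrom_eq_tsum_hitProb] using tsum_mul_hitProb_of_notMem M σ hs 1

end FirstStep

section Bellman

variable {S A : Type*} (M : MDP S A) (E : Set S)

open Classical in
/-- The Bellman operator for maximal reachability of `E`. The supremum runs over all actions:
those without outgoing mass contribute `0`. -/
noncomputable def bellman (w : S → ℝ≥0∞) (s : S) : ℝ≥0∞ :=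
  if s ∈ E then 1 else ⨆ a, ∑' s', M.P s a s' * w s'

variable {M E} {w : S → ℝ≥0∞}

lemma one_le_of_bellman_le (hw : M.bellman E w ≤ w) {s : S} (hs : s ∈ E) : 1 ≤ w s := by
  simpa [bellman, hs] using hw s

lemma tsum_mul_le_of_bellman_le (hw : M.bellman E w ≤ w) {s : S} (hs : s ∉ E) (a : A) :
    ∑' s', M.P s a s' * w s' ≤ w s := by
  refine (le_iSup (fun a => ∑' s', M.P s a s' * w s') a).trans ?_
  simpa [bellman, hs] using hw s

lemma tsum_hitProb_length_lt_le (hw : M.bellman E w ≤ w) (k : ℕ) (σ : List (A × S) → A) (s : S) :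
    ∑' l, (if l.length < k then 1 else 0) * hitProb M σ E s l ≤ w s := by
  induction k generalizing σ s with
  | zero => simp
  | succ k ih =>
    by_cases hs : s ∈ E
    · rw [tsum_mul_hitProb_of_mem M σ hs]
      simpa using one_le_of_bellman_le hw hs
    · rw [tsum_mul_hitProb_of_notMem M σ hs]
      simp only [List.length_cons, Nat.add_lt_add_iff_right]
      exact (ENNReal.tsum_le_tsum fun s' => mul_le_mul_right (ih _ s') _).trans
        (tsum_mul_le_of_bellman_le hw hs (σ []))

lemma reachProbFrom_le_of_bellman_le (hw : M.bellman E w ≤ w) (σ : List (A × S) → A) (s : S) :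
    reachProbFrom M σ s E ≤ w s := by
  rw [reachProbFrom_eq_tsum_hitProb]
  refine ENNReal.summable.tsum_le_of_sum_le fun F => ?_
  have length_lt : ∀ l ∈ F, l.length < F.sup List.length + 1 := fun l hl =>
    Nat.lt_succ_of_le (Finset.le_sup (f := List.length) hl)
  calc ∑ l ∈ F, hitProb M σ E s l
      = ∑ l ∈ F, (if l.length < F.sup List.length + 1 then 1 else 0) * hitProb M σ E s l :=
        Finset.sum_congr rfl fun l hl => by rw [if_pos (length_lt l hl), one_mul]
    _ ≤ ∑' l, (if l.length < F.sup List.length + 1 then 1 else 0) * hitProb M σ E s l :=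
        ENNReal.sum_le_tsum F
    _ ≤ w s := tsum_hitProb_length_lt_le hw _ σ s

theorem PmaxFrom_le_of_bellman_le (hw : M.bellman E w ≤ w) : M.PmaxFrom E ≤ w := fun s =>
  iSup_le fun σ => reachProbFrom_le_of_bellman_le hw σ.1 s

end Bellman

section Optimality

variable {S A : Type*} {M : MDP S A}

/-- The strategy that plays `a` first and then follows `τ s'`, where `s'` is the state reached by
the first step; `τ s'` sees only the history after that step. -/
def consStrategy (a : A) (τ : S → List (A × S) → A) : List (A × S) → A
  | [] => a
  | (_, s') :: h => τ s' h

lemma lastSt_cons (s : S) (p : A × S) (h : List (A × S)) :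
    lastSt s (p :: h) = lastSt p.2 h := by
  cases h <;> simp [lastSt, List.getLast?_cons]

lemma validFrom_consStrategy {s : S} {a : A} {τ : S → List (A × S) → A} (ha : M.Enabled s a)
    (hτ : ∀ s', ValidFrom M s' (τ s')) : ValidFrom M s (consStrategy a τ) := by
  rintro (_ | ⟨⟨b, s'⟩, h⟩) hen
  · exact ha
  · rw [lastSt_cons] at hen ⊢
    exact hτ s' h hen

instance nonempty_validFrom [Nonempty A] (s : S) :
    Nonempty {σ : List (A × S) → A // ValidFrom M s σ} :=
  ⟨fun h => Classical.epsilon (M.Enabled (lastSt s h)), fun _ => Classical.epsilon_spec⟩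

lemma PmaxFrom_of_mem [Nonempty A] {E : Set S} {s : S} (hs : s ∈ E) : M.PmaxFrom E s = 1 := by
  simp only [PmaxFrom, reachProbFrom_of_mem M _ hs, ciSup_const]

lemma tsum_mul_PmaxFrom_le {E : Set S} {s : S} (hs : s ∉ E) {a : A} (ha : M.Enabled s a) :
    ∑' s', M.P s a s' * M.PmaxFrom E s' ≤ M.PmaxFrom E s := by
  have : Nonempty A := ⟨a⟩
  simp only [PmaxFrom, ENNReal.mul_iSup]
  rw [tsum_iSup_eq_iSup_tsum_choice]
  refine iSup_le fun τ => ?_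
  let σ := consStrategy a fun s' => (τ s').1
  have hσ : ValidFrom M s σ := validFrom_consStrategy ha fun s' => (τ s').2
  calc ∑' s', M.P s a s' * reachProbFrom M (τ s').1 s' E
      = reachProbFrom M σ s E := (reachProbFrom_of_notMem M σ hs).symm
    _ ≤ ⨆ ρ : {ρ : List (A × S) → A // ValidFrom M s ρ}, reachProbFrom M ρ.1 s E :=
        le_iSup_of_le ⟨σ, hσ⟩ le_rfl

theorem bellman_PmaxFrom_le [Nonempty A] (hM : ∀ s a, M.Enabled s a ∨ M.P s a = 0) (E : Set S) :
    M.bellman E (M.PmaxFrom E) ≤ M.PmaxFrom E := by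
  intro s
  by_cases hs : s ∈ E
  · simp [bellman, hs, PmaxFrom_of_mem]
  · simp only [bellman, if_neg hs]
    refine iSup_le fun a => ?_
    rcases hM s a with ha | ha
    · exact tsum_mul_PmaxFrom_le hs ha
    · simp [ha]

end Optimality

end MDP

section SymbolicMDP

variable {Val Cmd : Type*} (M : SymMDP Val Cmd)

lemma SymMDP.toMDP_P_of_guard {s : Val} {c : Cmd} (h : M.guard c s) :
    M.toMDP.P s c = (M.dist c).map fun a => a s := by
  funext s'
  exact if_pos h

lemma SymMDP.enabled_or_eq_zero (s : Val) (c : Cmd) :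
    M.toMDP.Enabled s c ∨ M.toMDP.P s c = 0 := by
  by_cases h : M.guard c s
  · left
    rw [MDP.Enabled, M.toMDP_P_of_guard h]
    exact PMF.tsum_coe _
  · right
    funext s'
    exact if_neg h

end SymbolicMDP

section AbstractDomain

variable {Val AS : Type*} [PartialOrder AS] (D : AbsDom Val AS)

lemma AbsDom.conc_mono : Monotone D.conc :=
  GaloisConnection.monotone_u (l := D.abstr) D.galois

lemma AbsDom.apply_mem_conc_of_post_le {a : Val → Val} {x y : AS} (h : D.post a x ≤ y) {s : Val}
    (hs : s ∈ D.conc x) : a s ∈ D.conc y :=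
  (D.galois _ _).1 h (Set.mem_image_of_mem a hs)

end AbstractDomain

namespace PASG

variable {Val AS Cmd Node : Type*} [PartialOrder AS] {M : SymMDP Val Cmd} {D : AbsDom Val AS}
  {P : PASG Val AS Cmd Node}

lemma WellLabeled.guard_iff (hwl : WellLabeled M D P) {n : Node} {s : Val}
    (hs : s ∈ D.conc (P.La n)) (c : Cmd) : M.guard c (P.Lc n) ↔ M.guard c s := by
  have hA2 := hwl.A2 n c
  unfold AbsDom.beval cevalTV at hA2
  split_ifs at hA2 with hall hn hnone hn
  · exact iff_of_true hn (hall s hs)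
  · exact iff_of_false hn (hnone s hs)

/-- The worst value of a state represented by the node `n`. With `w` the maximal reachability
probability of the symbolic MDP, this is the pre-fixed point that bounds the graph. -/
noncomputable def worstValue (D : AbsDom Val AS) (P : PASG Val AS Cmd Node) (w : Val → ℝ≥0∞)
    (n : Node) : ℝ≥0∞ :=
  ⨅ s ∈ D.conc (P.La n), w s

lemma worstValue_le {n : Node} {s : Val} (hs : s ∈ D.conc (P.La n)) (w : Val → ℝ≥0∞) :
    worstValue D P w n ≤ w s :=
  iInf₂_le s hs

lemma tsum_command_mul_worstValue_le (hwl : WellLabeled M D P) (n₀ : Node) {n : Node} {s : Val}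
    (hs : s ∈ D.conc (P.La n)) (c : Cmd) (w : Val → ℝ≥0∞) :
    ∑' m, (P.toMDP M n₀).P n (Sum.inl c) m * worstValue D P w m ≤
      ∑' s', M.toMDP.P s c s' * w s' := by
  by_cases hedge : P.EC n = none ∧ ∃ f, (n, c, f) ∈ P.ET
  · have hmem := hedge.2.choose_spec
    have hguard : M.guard c s := (hwl.guard_iff hs c).1 (hwl.B1 _ hmem)
    simp only [toMDP, dif_pos hedge, M.toMDP_P_of_guard hguard, tsum_pmf_map_mul]
    refine ENNReal.tsum_le_tsum fun a => ?_
    by_cases ha : a ∈ (M.dist c).support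
    · have hsucc := D.apply_mem_conc_of_post_le (hwl.B2a _ hmem a ha) hs
      exact mul_le_mul_right (worstValue_le hsucc w) _
    · simp [((M.dist c).apply_eq_zero_iff a).2 ha]
  · simp [toMDP, hedge]

lemma tsum_cover_mul_worstValue_le (hwl : WellLabeled M D P) (n₀ : Node) {n : Node} {s : Val}
    (hs : s ∈ D.conc (P.La n)) (u : Unit) (w : Val → ℝ≥0∞) :
    ∑' m, (P.toMDP M n₀).P n (Sum.inr u) m * worstValue D P w m ≤ w s := by
  rcases hcover : P.EC n with _ | n'
  · simp [toMDP, hcover]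
  · have hs' : s ∈ D.conc (P.La n') := D.conc_mono (hwl.C2 n n' hcover) hs
    simpa [toMDP, hcover] using worstValue_le hs' w

theorem bellman_worstValue_le (hwl : WellLabeled M D P) (n₀ : Node) {c : Cmd} {w : Val → ℝ≥0∞}
    (hw : M.toMDP.bellman {s | M.guard c s} w ≤ w) :
    (P.toMDP M n₀).bellman {n | M.guard c (P.Lc n)} (worstValue D P w) ≤ worstValue D P w := by
  refine fun n => le_iInf₂ fun s hs => ?_
  by_cases htarget : M.guard c (P.Lc n)
  · simpa [MDP.bellman, htarget] using MDP.one_le_of_bellman_le hw ((hwl.guard_iff hs c).1 htarget)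
  · have hs_target : ¬ M.guard c s := mt (hwl.guard_iff hs c).2 htarget
    simp only [MDP.bellman, Set.mem_ofPred_eq, if_neg htarget]
    refine iSup_le ?_
    rintro (d | u)
    · exact (tsum_command_mul_worstValue_le hwl n₀ hs d w).trans
        (MDP.tsum_mul_le_of_bellman_le hw hs_target d)
    · exact tsum_cover_mul_worstValue_le hwl n₀ hs u w

end PASG

theorem pasg_lower_soundness_general {Val AS Cmd Node : Type*} [PartialOrder AS]
    (M : SymMDP Val Cmd) (D : AbsDom Val AS) (P : PASG Val AS Cmd Node) (c : Cmd)
    (hwl : PASG.WellLabeled M D P) (n₀ : Node) {n : Node} {s : Val} (hs : s ∈ D.conc (P.La n)) :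
    (P.toMDP M n₀).PmaxFrom {m | M.guard c (P.Lc m)} n ≤ M.toMDP.PmaxFrom {t | M.guard c t} s := by
  have : Nonempty Cmd := ⟨c⟩
  have hw := MDP.bellman_PmaxFrom_le M.enabled_or_eq_zero {t | M.guard c t}
  calc (P.toMDP M n₀).PmaxFrom {m | M.guard c (P.Lc m)} n
      ≤ PASG.worstValue D P (M.toMDP.PmaxFrom {t | M.guard c t}) n :=
        MDP.PmaxFrom_le_of_bellman_le (PASG.bellman_worstValue_le hwl n₀ hw) n
    _ ≤ M.toMDP.PmaxFrom {t | M.guard c t} s := PASG.worstValue_le hs _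

/-- The maximal probability of reaching a target node in the MDP
induced by a well-labeled finished PASG `P` for `M` (rooted at `n₀`, labeled by the
initial valuation) is at most the maximal probability of reaching a target state
in `M`. -/
theorem pasg_lower_soundness {Val AS Cmd Node : Type*} [PartialOrder AS] [Finite Cmd]
    (M : SymMDP Val Cmd) (D : AbsDom Val AS) (P : PASG Val AS Cmd Node)
    (φ : Val → Prop) (tc : Cmd)
    (htcg : ∀ s, M.guard tc s ↔ φ s) (htcd : M.dist tc = PMF.pure id)
    (hwl : PASG.WellLabeled M D P) (hfin : PASG.Finished M P)
    (n₀ : Node) (hroot : P.Lc n₀ = M.init) :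
    MDP.Pmax (PASG.toMDP M P n₀) {n | M.guard tc (P.Lc n)} ≤
      MDP.Pmax M.toMDP {s | M.guard tc s} := by
  have root_represents : M.init ∈ D.conc (P.La n₀) := hroot ▸ hwl.A1 n₀
  exact pasg_lower_soundness_general M D P tc hwl n₀ root_represents
end

section
/- Let P be a well-labeled finished PASG for the symbolic MDP M, and suppose node n is covered by node n' (i.e., (n,n')∈E_C). Then for every finite sequence (c1,a1),…,(ck,ak) of commands with chosen assignments (a_i in the support of d_{c_i}) that is executable from L_c(n) — meaning each guard g_{c_i} evaluates to True in the state obtained by applying a_1,…,a_{i-1} successively to L_c(n) — the same sequence is also executable from L_c(n'). -/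
/-!
Two states represented by one node, i.e. lying in the concretization of its abstract label, simulate
each other. Following the covering edge, if there is one, only enlarges the abstract label and ends
in an expanded node. By A2 the guards cannot tell apart the states represented by that node, so a
command enabled in one of the two states is enabled in both and labels one of its edges; by B2 the
result node of any assignment on that edge represents both successor states. If `n` is covered by
`n'`, then `n'` represents both `Lc n` (C1) and `Lc n'` (A1).
-/

open scoped ENNReal

/-- A finite sequence of commands with chosen assignments (each in the support of the
command's distribution) is executable from a state iff each guard holds in the state
obtained by successively applying the previous assignments. -/
def Executable {Val Cmd : Type*} (M : SymMDP Val Cmd) :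
    Val → List (Cmd × (Val → Val)) → Prop
  | _, [] => True
  | s, (c, a) :: rest =>
      M.guard c s ∧ a ∈ (M.dist c).support ∧ Executable M (a s) rest

/-- A simulation between states of a symbolic MDP. A step is answered by the same command with the
same assignment, so that simulating states execute literally the same sequences. -/
structure SymMDP.IsSimulation {Val Cmd : Type*} (M : SymMDP Val Cmd) (R : Val → Val → Prop) :
    Prop where
  guard : ∀ ⦃s t c⦄, R s t → M.guard c s → M.guard c t
  step : ∀ ⦃s t c a⦄, R s t → M.guard c s → a ∈ (M.dist c).support → R (a s) (a t)

theorem SymMDP.IsSimulation.executable {Val Cmd : Type*} {M : SymMDP Val Cmd}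
    {R : Val → Val → Prop} (hR : M.IsSimulation R) {s t : Val} (hst : R s t)
    {seq : List (Cmd × (Val → Val))} (hex : Executable M s seq) : Executable M t seq := by
  induction seq generalizing s t with
  | nil => trivial
  | cons ca rest ih =>
    obtain ⟨hguard, ha, hrest⟩ := hex
    exact ⟨hR.guard hst hguard, ha, ih (hR.step hst hguard ha) hrest⟩

namespace AbsDom

variable {Val AS : Type*} [PartialOrder AS] (D : AbsDom Val AS)

theorem gc_abstr_conc : GaloisConnection D.abstr D.conc :=
  D.galois

theorem post_le_iff_mapsTo {a : Val → Val} {x y : AS} :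
    D.post a x ≤ y ↔ Set.MapsTo a (D.conc x) (D.conc y) :=
  (D.galois _ _).trans Set.mapsTo_iff_image_subset.symm

variable {D}

theorem iff_of_beval_eq_cevalTV {b : Val → Prop} {x : AS} {s t : Val}
    (h : D.beval b x = cevalTV b s) (ht : t ∈ D.conc x) : b t ↔ b s := by
  unfold beval cevalTV at h
  split_ifs at h with hall hs hnone hs
  · exact iff_of_true (hall t ht) hs
  · exact iff_of_false (hnone t ht) hs

end AbsDom

namespace PASG

variable {Val AS Cmd Node : Type*} {M : SymMDP Val Cmd} {P : PASG Val AS Cmd Node}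

theorem Finished.expanded_of_EC_eq_none (hfin : P.Finished M) {n : Node} (hn : P.EC n = none) :
    P.Expanded M n :=
  (hfin n).resolve_left (not_not_intro hn)

variable [PartialOrder AS] {D : AbsDom Val AS}

/-- Two states are corepresented if some node has both in the concretization of its abstract label.
This is the relation that is shown to be a simulation. -/
def Corepresented (D : AbsDom Val AS) (P : PASG Val AS Cmd Node) (s t : Val) : Prop :=
  ∃ m, s ∈ D.conc (P.La m) ∧ t ∈ D.conc (P.La m)

namespace WellLabeled

theorem guard_iff_of_mem_conc (hwl : P.WellLabeled M D) {m : Node} {s : Val}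
    (hs : s ∈ D.conc (P.La m)) (c : Cmd) : M.guard c s ↔ M.guard c (P.Lc m) :=
  AbsDom.iff_of_beval_eq_cevalTV (hwl.A2 m c) hs

theorem exists_expanded_ge (hwl : P.WellLabeled M D) (hfin : P.Finished M) (m : Node) :
    ∃ m', P.La m ≤ P.La m' ∧ P.Expanded M m' := by
  cases hm : P.EC m with
  | none => exact ⟨m, le_rfl, hfin.expanded_of_EC_eq_none hm⟩
  | some m' => exact ⟨m', hwl.C2 m m' hm, hfin.expanded_of_EC_eq_none (hwl.C3 m m' hm)⟩

theorem exists_mapsTo_conc (hwl : P.WellLabeled M D) (hfin : P.Finished M) {m : Node} {s : Val}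
    (hs : s ∈ D.conc (P.La m)) {c : Cmd} (hguard : M.guard c s) {a : Val → Val}
    (ha : a ∈ (M.dist c).support) :
    ∃ k, Set.MapsTo a (D.conc (P.La m)) (D.conc (P.La k)) := by
  obtain ⟨m', hle, hexp⟩ := hwl.exists_expanded_ge hfin m
  have hsub : D.conc (P.La m) ⊆ D.conc (P.La m') := D.gc_abstr_conc.monotone_u hle
  obtain ⟨f, hf⟩ := hexp c ((hwl.guard_iff_of_mem_conc (hsub hs) c).1 hguard)
  have hmaps : Set.MapsTo a (D.conc (P.La m')) (D.conc (P.La (f a))) :=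
    D.post_le_iff_mapsTo.1 (hwl.B2a _ hf a ha)
  exact ⟨f a, hmaps.mono_left hsub⟩

theorem isSimulation_corepresented (hwl : P.WellLabeled M D) (hfin : P.Finished M) :
    M.IsSimulation (P.Corepresented D) where
  guard := by
    rintro s t c ⟨m, hs, ht⟩ hguard
    exact (hwl.guard_iff_of_mem_conc ht c).2 ((hwl.guard_iff_of_mem_conc hs c).1 hguard)
  step := by
    rintro s t c a ⟨m, hs, ht⟩ hguard ha
    obtain ⟨k, hmaps⟩ := hwl.exists_mapsTo_conc hfin hs hguard ha
    exact ⟨k, hmaps hs, hmaps ht⟩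

end WellLabeled

end PASG

theorem covered_executable_general {Val AS Cmd Node : Type*} [PartialOrder AS]
    {M : SymMDP Val Cmd} {D : AbsDom Val AS} {P : PASG Val AS Cmd Node}
    (hwl : P.WellLabeled M D) (hfin : P.Finished M) {m : Node} {s t : Val}
    (hs : s ∈ D.conc (P.La m)) (ht : t ∈ D.conc (P.La m))
    {seq : List (Cmd × (Val → Val))} (hex : Executable M s seq) : Executable M t seq :=
  (hwl.isSimulation_corepresented hfin).executable ⟨m, hs, ht⟩ hex

/-- In a well-labeled finished PASG, if node `n` is covered by `n'`,
then every command/assignment sequence executable from `Lc n` is also executable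
from `Lc n'`. -/
theorem covered_executable {Val AS Cmd Node : Type*} [PartialOrder AS] [Finite Cmd]
    (M : SymMDP Val Cmd) (D : AbsDom Val AS) (P : PASG Val AS Cmd Node)
    (hwl : PASG.WellLabeled M D P) (hfin : PASG.Finished M P)
    (n n' : Node) (hcov : P.EC n = some n')
    (seq : List (Cmd × (Val → Val))) (hex : Executable M (P.Lc n) seq) :
    Executable M (P.Lc n') seq :=
  covered_executable_general hwl hfin (hwl.C1 n n' hcov) (hwl.A1 n') hex
end
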